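/- arXiv:1403.5926 — 7 statements merged into one kernel-verified Lean document; each statement's English description precedes it below -/
import Mathlib

section
/- Let n ≥ 1 and let A be an n×n complex Hermitian positive semidefinite matrix, and let β > 0 be a real number. Then det(A + β·I), which is a nonnegative real number, satisfies det(A + β·I) ≥ Σ_{k=0}^{n} β^k · (det A)^{(n-k)/n}, where det A is the (nonnegative real) determinant of A and the fractional powers are real powers. -/
open ComplexOrder

/-- Mahler's inequality for a constant shift. -/
lemma aux_mahler (n : ℕ) (hn : 1 ≤ n) (l : Fin n → ℝ) (hl : ∀ i, 0 ≤ l i) (β : ℝ)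
    (hβ : 0 < β) : ((∏ i, l i) ^ ((1 : ℝ) / n) + β) ^ n ≤ ∏ i, (l i + β) := by
  have hn0 : (n : ℝ) ≠ 0 := by positivity
  have hpos : ∀ i, 0 < l i + β := fun i => by linarith [hl i]
  have hP : 0 < ∏ i, (l i + β) := Finset.prod_pos fun i _ => hpos i
  have amgm : ∀ z : Fin n → ℝ, (∀ i, 0 ≤ z i) →
      (∏ i, z i) ^ ((1 : ℝ) / n) ≤ ∑ i, (1 / n : ℝ) * z i := by
    intro z hz
    rw [← Real.finsetProd_rpow _ _ (fun i _ => hz i)]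
    refine Real.geom_mean_le_arith_mean_weighted Finset.univ (fun _ => (1 / n : ℝ)) z
      (fun _ _ => by positivity) ?_ (fun i _ => hz i)
    simp [hn0]
  have h1 := amgm (fun i => l i / (l i + β)) (fun i => div_nonneg (hl i) (hpos i).le)
  have h2 := amgm (fun i => β / (l i + β)) (fun i => div_nonneg hβ.le (hpos i).le)
  have hs : ∑ i, (1 / n : ℝ) * (l i / (l i + β)) + ∑ i, (1 / n : ℝ) * (β / (l i + β)) = 1 := by
    rw [← Finset.sum_add_distrib]
    have : ∀ i, (1 / n : ℝ) * (l i / (l i + β)) + (1 / n : ℝ) * (β / (l i + β)) = 1 / n := by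
      intro i
      have := (hpos i).ne'
      rw [← mul_add, ← add_div, div_self this, mul_one]
    rw [Finset.sum_congr rfl fun i _ => this i]
    simp [hn0]
  have hl0 : 0 ≤ ∏ i, l i := Finset.prod_nonneg fun i _ => hl i
  simp only [Finset.prod_div_distrib] at h1 h2
  rw [Real.div_rpow hl0 hP.le] at h1
  rw [Real.div_rpow (Finset.prod_nonneg fun i _ => hβ.le) hP.le] at h2
  have hb : (∏ _i : Fin n, β) ^ ((1 : ℝ) / n) = β := by
    rw [Finset.prod_const, Finset.card_univ, Fintype.card_fin, one_div,
      Real.pow_rpow_inv_natCast hβ.le (by omega)]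
  rw [hb] at h2
  have hR : 0 < (∏ i, (l i + β)) ^ ((1 : ℝ) / n) := Real.rpow_pos_of_pos hP _
  have h3 : ((∏ i, l i) ^ ((1 : ℝ) / n) + β) / (∏ i, (l i + β)) ^ ((1 : ℝ) / n) ≤ 1 := by
    rw [add_div]; linarith
  rw [div_le_one hR] at h3
  calc _ ≤ ((∏ i, (l i + β)) ^ ((1 : ℝ) / n)) ^ n := by gcongr
    _ = _ := by rw [one_div, Real.rpow_inv_natCast_pow hP.le (by omega)]

/-- Lemma 3.5: for an `n × n` complex Hermitian positive semidefinite matrix `A`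
and `β > 0`, the (real, nonnegative) determinant of `A + β • I` satisfies
`det (A + β • I) ≥ ∑_{k=0}^{n} β^k (det A)^{(n-k)/n}`. -/
theorem det_add_smul_one_ge_sum_rpow (n : ℕ) (hn : 1 ≤ n)
    (A : Matrix (Fin n) (Fin n) ℂ) (hA : A.PosSemidef) (β : ℝ) (hβ : 0 < β) :
    ∑ k ∈ Finset.range (n + 1), β ^ k * (A.det.re) ^ (((n : ℝ) - k) / n)
      ≤ (A + (β : ℂ) • (1 : Matrix (Fin n) (Fin n) ℂ)).det.re := by
  have hn0 : (n : ℝ) ≠ 0 := by positivity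
  set l := hA.1.eigenvalues with hldef
  have hl : ∀ i, 0 ≤ l i := hA.eigenvalues_nonneg
  have hd : A.det = ((∏ i, l i : ℝ) : ℂ) := by
    rw [hA.1.det_eq_prod_eigenvalues]; simp [hldef]
  have hdb : (A + (β : ℂ) • (1 : Matrix (Fin n) (Fin n) ℂ)).det
      = ((∏ i, (l i + β) : ℝ) : ℂ) := by
    have h := Matrix.eval_charpoly A (-(β : ℂ))
    rw [hA.1.charpoly_eq, Polynomial.eval_prod] at h
    have e : Matrix.scalar (Fin n) (-(β : ℂ)) - A = -(A + (β : ℂ) • 1) := by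
      ext i j
      by_cases hij : i = j
      · subst hij; simp; ring
      · simp [hij]
    rw [e, Matrix.det_neg] at h
    have e2 : ∏ i, Polynomial.eval (-(β : ℂ)) (Polynomial.X - Polynomial.C ((l i : ℝ) : ℂ))
        = (-1) ^ n * ((∏ i, (l i + β) : ℝ) : ℂ) := by
      have : ∀ i, Polynomial.eval (-(β : ℂ)) (Polynomial.X - Polynomial.C ((l i : ℝ) : ℂ))
        = (-1) * ((l i + β : ℝ) : ℂ) := by
        intro i; simp; ring
      simp only [this, Finset.prod_mul_distrib]
      simp
    have h' := e2.symm.trans h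
    rw [Fintype.card_fin] at h'
    exact (mul_left_cancel₀ (by simp) h').symm
  rw [hd, hdb, Complex.ofReal_re, Complex.ofReal_re]
  refine le_trans ?_ (aux_mahler n hn l hl β hβ)
  have hD : 0 ≤ ∏ i, l i := Finset.prod_nonneg fun i _ => hl i
  rw [add_comm _ β, add_pow]
  refine Finset.sum_le_sum fun k hk => ?_
  have hk' : k ≤ n := by simpa [Nat.lt_succ_iff] using hk
  have e : (∏ i, l i) ^ (((n : ℝ) - k) / n) = ((∏ i, l i) ^ ((1 : ℝ) / n)) ^ (n - k) := by
    rw [← Real.rpow_natCast, ← Real.rpow_mul hD, Nat.cast_sub hk']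
    congr 1; ring
  rw [e]
  refine le_mul_of_one_le_right (by positivity) ?_
  exact_mod_cast Nat.choose_pos hk'
end

section
/- Let n ≥ 1, let 0 ≤ λ₁ ≤ λ₂ ≤ ⋯ ≤ λₙ be real numbers, and let β ≥ 0. Then ∏_{j=1}^{n} (λ_j + β) ≥ Σ_{k=0}^{n} β^k · ∏_{j=k+1}^{n} λ_j, where the product over the empty index range (k = n) equals 1. -/
theorem prod_tail_aux (β : ℝ) (hβ : 0 ≤ β) (n : ℕ) :
    ∀ lam : Fin n → ℝ, (∀ j, 0 ≤ lam j) →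
    ∑ k ∈ Finset.range (n + 1),
        β ^ k * ∏ j ∈ Finset.univ.filter (fun j : Fin n => k ≤ (j : ℕ)), lam j
      ≤ ∏ j, (lam j + β) := by
  induction n with
  | zero => intro lam _; simp
  | succ n ih =>
    intro lam h
    have ih' := ih (fun j => lam j.castSucc) (fun j => h _)
    have hp : β ^ n ≤ ∏ j : Fin n, (lam j.castSucc + β) := by
      have := Finset.prod_le_prod (s := (Finset.univ : Finset (Fin n))) (f := fun _ => β)
        (g := fun j => lam j.castSucc + β) (fun _ _ => hβ)
        (fun j _ => by linarith [h j.castSucc])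
      simpa using this
    simp only [Finset.prod_filter] at ih' ⊢
    rw [Finset.sum_range_succ, Fin.prod_univ_castSucc (fun j => lam j + β)]
    have e1 : ∏ j : Fin (n + 1), (if n + 1 ≤ (j : ℕ) then lam j else 1) = 1 := by
      apply Finset.prod_eq_one
      intro j _
      rw [if_neg (by omega)]
    have e2 : ∑ k ∈ Finset.range (n + 1),
        β ^ k * ∏ j : Fin (n + 1), (if k ≤ (j : ℕ) then lam j else 1)
        = (∑ k ∈ Finset.range (n + 1),
        β ^ k * ∏ j : Fin n, (if k ≤ (j : ℕ) then lam j.castSucc else 1)) * lam (Fin.last n) := by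
      rw [Finset.sum_mul]
      apply Finset.sum_congr rfl
      intro k hk
      have hk' : k ≤ n := by simpa [Nat.lt_succ_iff] using hk
      rw [Fin.prod_univ_castSucc]
      simp [hk', mul_assoc]
    rw [e1, e2, pow_succ]
    nlinarith [mul_le_mul_of_nonneg_right ih' (h (Fin.last n)),
      mul_le_mul_of_nonneg_right hp hβ]

/-- Eigenvalue inequality underlying Lemma 3.5: for `0 ≤ λ₁ ≤ ⋯ ≤ λₙ` and `β ≥ 0`,
`∏_{j=1}^n (λ_j + β) ≥ ∑_{k=0}^n β^k ∏_{j=k+1}^n λ_j`. -/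
theorem prod_add_ge_sum_pow_mul_prod_tail (n : ℕ) (hn : 1 ≤ n)
    (lam : Fin n → ℝ) (hmono : Monotone lam) (hnonneg : ∀ j, 0 ≤ lam j)
    (β : ℝ) (hβ : 0 ≤ β) :
    ∑ k ∈ Finset.range (n + 1),
        β ^ k * ∏ j ∈ Finset.univ.filter (fun j : Fin n => k ≤ (j : ℕ)), lam j
      ≤ ∏ j, (lam j + β) :=
  prod_tail_aux β hβ n lam hnonneg
end

section
/- Let f : [1,∞) → [1,∞) be continuous and monotonically increasing with ∫_t^∞ da/(a·f(a)) < ∞ for every t ≥ 1, and assume that t ↦ f(t)/t^{1/2} is antitone (decreasing) on [1,∞). Then for every t ≥ 1 one has f(t) · ∫_t^∞ da/(a·f(a)) ≥ 2; equivalently, with g(t) := (∫_t^∞ da/(a·f(a)))^{-1}, one has g(t)/f(t) ≤ 1/2. -/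
open MeasureTheory

/-- If `f : [1,∞) → [1,∞)` is continuous, increasing, has finite tail integrals and
`f(t)/t^{1/2}` is decreasing, then `f(t) · ∫_t^∞ da/(a f(a)) ≥ 2` for every `t ≥ 1`. -/
theorem two_le_mul_tail_integral (f : ℝ → ℝ)
    (hf_cont : ContinuousOn f (Set.Ici 1))
    (hf_mono : MonotoneOn f (Set.Ici 1))
    (hf_ge : ∀ t ≥ (1 : ℝ), 1 ≤ f t)
    (hf_int : ∀ t ≥ (1 : ℝ), IntegrableOn (fun a => 1 / (a * f a)) (Set.Ioi t))
    (hf_anti : AntitoneOn (fun t => f t / t ^ ((1 : ℝ) / 2)) (Set.Ici 1)) :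
    ∀ t ≥ (1 : ℝ), 2 ≤ f t * ∫ a in Set.Ioi t, 1 / (a * f a) := by
  intro t ht
  have ht0 : (0 : ℝ) < t := by linarith
  have hI := integral_Ioi_rpow_of_lt (a := -(3 / 2 : ℝ)) (by norm_num) ht0
  have hInt := integrableOn_Ioi_rpow_of_lt (a := -(3 / 2 : ℝ)) (by norm_num) ht0
  have hs : 0 < t ^ ((1 : ℝ) / 2) := Real.rpow_pos_of_pos ht0 _
  have h2 : ∫ a in Set.Ioi t, t ^ ((1 : ℝ) / 2) * a ^ (-(3 / 2 : ℝ)) = 2 := by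
    rw [integral_const_mul, hI]
    have e : (-(3 / 2 : ℝ) + 1) = -(1 / 2) := by norm_num
    rw [e, Real.rpow_neg ht0.le]
    field_simp
  rw [← integral_const_mul, ← h2]
  refine setIntegral_mono_on (hInt.const_mul _) ((hf_int t ht).const_mul _)
    measurableSet_Ioi ?_
  intro a ha
  have hta : t < a := ha
  have ha1 : (1 : ℝ) ≤ a := by linarith
  have ha0 : (0 : ℝ) < a := by linarith
  have hfa : 0 < f a := by linarith [hf_ge a ha1]
  have hsa : 0 < a ^ ((1 : ℝ) / 2) := Real.rpow_pos_of_pos ha0 _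
  have h : f a / a ^ ((1 : ℝ) / 2) ≤ f t / t ^ ((1 : ℝ) / 2) := hf_anti ht ha1 hta.le
  rw [div_le_div_iff₀ hsa hs] at h
  have e : a ^ (-(3 / 2 : ℝ)) = 1 / (a * a ^ ((1 : ℝ) / 2)) := by
    have : (3 / 2 : ℝ) = 1 + 1 / 2 := by norm_num
    rw [Real.rpow_neg ha0.le, this, Real.rpow_add ha0, Real.rpow_one, inv_eq_one_div]
  rw [e, mul_one_div, mul_one_div, div_le_div_iff₀ (by positivity) (by positivity)]
  nlinarith [mul_le_mul_of_nonneg_left h ha0.le]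
end

section
/- Let f : [1,∞) → [1,∞) be differentiable and monotonically increasing with ∫_t^∞ da/(a·f(a)) < ∞ for every t ≥ 1, assume that t ↦ f(t)/t^{1/2} is antitone (decreasing) on [1,∞), and define g(t) := (∫_t^∞ da/(a·f(a)))^{-1}. Then for every t > 1 one has g(t)/f(t) + t·f'(t)/f(t) ≤ 1. -/
open MeasureTheory

/-- Inequality (2.3): if `f : [1,∞) → [1,∞)` is differentiable, increasing, has
finite tail integrals and `f(t)/t^{1/2}` is decreasing, then with
`g(t) := (∫_t^∞ da/(a f(a)))⁻¹` one has `g(t)/f(t) + t f'(t)/f(t) ≤ 1` for `t > 1`. -/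
theorem g_div_f_add_logDeriv_le_one (f : ℝ → ℝ)
    (hf_diff : ∀ t ≥ (1 : ℝ), DifferentiableAt ℝ f t)
    (hf_mono : MonotoneOn f (Set.Ici 1))
    (hf_ge : ∀ t ≥ (1 : ℝ), 1 ≤ f t)
    (hf_int : ∀ t ≥ (1 : ℝ), IntegrableOn (fun a => 1 / (a * f a)) (Set.Ioi t))
    (hf_anti : AntitoneOn (fun t => f t / t ^ ((1 : ℝ) / 2)) (Set.Ici 1)) :
    ∀ t > (1 : ℝ),
      (∫ a in Set.Ioi t, 1 / (a * f a))⁻¹ / f t + t * deriv f t / f t ≤ 1 := by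
  intro t ht
  have ht0 : 0 < t := by linarith
  have hft : 0 < f t := by linarith [hf_ge t ht.le]
  set r : ℝ := t ^ ((1 : ℝ) / 2) with hr
  have hr0 : 0 < r := Real.rpow_pos_of_pos ht0 _
  -- the tail integral is at least `2 / f t`
  have h1 : 2 / f t ≤ ∫ a in Set.Ioi t, 1 / (a * f a) := by
    have e : ∫ a in Set.Ioi t, (r / f t) * a ^ (-(3 / 2) : ℝ) = 2 / f t := by
      rw [integral_const_mul, integral_Ioi_rpow_of_lt (by norm_num) ht0]
      have : t ^ (-(3 / 2) + 1 : ℝ) = r⁻¹ := by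
        rw [hr, ← Real.rpow_neg ht0.le]; norm_num
      rw [this]
      field_simp
      norm_num
    rw [← e]
    refine setIntegral_mono_on
      ((integrableOn_Ioi_rpow_of_lt (by norm_num) ht0).const_mul _)
      (hf_int t ht.le) measurableSet_Ioi ?_
    intro a ha
    have hta : t < a := ha
    have ha0 : 0 < a := by linarith
    have ha1 : 1 ≤ a := by linarith
    have hfa : 0 < f a := by linarith [hf_ge a ha1]
    have hs0 : 0 < a ^ ((1 : ℝ) / 2) := Real.rpow_pos_of_pos ha0 _
    have h := hf_anti (show t ∈ Set.Ici 1 from ht.le) (show a ∈ Set.Ici 1 from ha1) hta.le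
    simp only [← hr] at h
    rw [div_le_div_iff₀ hs0 hr0] at h
    have e2 : a ^ (-(3 / 2) : ℝ) = (a * a ^ ((1 : ℝ) / 2))⁻¹ := by
      rw [Real.rpow_neg ha0.le, show (3 / 2 : ℝ) = 1 + 1 / 2 by norm_num,
        Real.rpow_add ha0, Real.rpow_one]
    rw [e2, ← div_eq_mul_inv, div_div, div_le_div_iff₀ (by positivity) (by positivity)]
    nlinarith
  have h2 : (∫ a in Set.Ioi t, 1 / (a * f a))⁻¹ / f t ≤ 1 / 2 := by
    have : (∫ a in Set.Ioi t, 1 / (a * f a))⁻¹ ≤ (2 / f t)⁻¹ :=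
      inv_anti₀ (by positivity) h1
    rw [inv_div] at this
    rw [div_le_iff₀ hft]
    linarith
  -- the logarithmic derivative is at most `1 / 2`
  have h3 : t * deriv f t / f t ≤ 1 / 2 := by
    have hd := (hf_diff t ht.le).hasDerivAt.div
      (Real.hasDerivAt_rpow_const (x := t) (p := (1 : ℝ) / 2) (Or.inl ht0.ne')) hr0.ne'
    have hn := hf_anti.derivWithin_nonpos (x := t)
    rw [derivWithin_of_mem_nhds (Ici_mem_nhds ht)] at hn
    have hn' := hd.deriv.symm.trans_le hn
    rw [← hr, div_le_iff₀ (by positivity), zero_mul, Real.rpow_sub ht0, Real.rpow_one,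
      ← hr] at hn'
    have e3 : deriv f t * r - f t * (1 / 2 * (r / t)) = (t * deriv f t - f t / 2) * (r / t) := by
      field_simp
    rw [e3] at hn'
    have := nonpos_of_mul_nonpos_left hn' (by positivity)
    rw [div_le_iff₀ hft]
    linarith
  linarith
end

section
/- Let f : [1,∞) → [1,∞) be continuous and monotonically increasing with ∫_t^∞ da/(a·f(a)) < ∞ for every t ≥ 1, assume that t ↦ f(t)/t^{1/2} is antitone (decreasing) on [1,∞), and define g(t) := (∫_t^∞ da/(a·f(a)))^{-1}. Then the function t ↦ g(t)/t^{1/2} is antitone (decreasing) on (1,∞). -/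
open MeasureTheory

/-- Lemma 2.3 (iv) ingredient: if `f : [1,∞) → [1,∞)` is continuous, increasing, has
finite tail integrals and `f(t)/t^{1/2}` is decreasing, then with
`g(t) := (∫_t^∞ da/(a f(a)))⁻¹` the function `g(t)/t^{1/2}` is decreasing on `(1,∞)`. -/
theorem antitoneOn_g_div_sqrt (f : ℝ → ℝ)
    (hf_cont : ContinuousOn f (Set.Ici 1))
    (hf_mono : MonotoneOn f (Set.Ici 1))
    (hf_ge : ∀ t ≥ (1 : ℝ), 1 ≤ f t)
    (hf_int : ∀ t ≥ (1 : ℝ), IntegrableOn (fun a => 1 / (a * f a)) (Set.Ioi t))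
    (hf_anti : AntitoneOn (fun t => f t / t ^ ((1 : ℝ) / 2)) (Set.Ici 1)) :
    AntitoneOn (fun t => (∫ a in Set.Ioi t, 1 / (a * f a))⁻¹ / t ^ ((1 : ℝ) / 2))
      (Set.Ioi 1) := by
  intro s hs t ht hst
  have hs1 : (1 : ℝ) < s := hs
  have ht1 : (1 : ℝ) < t := ht
  have hs0 : 0 < s := by linarith
  have ht0 : 0 < t := by linarith
  have hps : 0 < s ^ ((1 : ℝ) / 2) := Real.rpow_pos_of_pos hs0 _
  have hpt : 0 < t ^ ((1 : ℝ) / 2) := Real.rpow_pos_of_pos ht0 _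
  have hpos : ∀ a, s < a → 0 < 1 / (a * f a) := fun a ha => by
    have h1 := hf_ge a (by linarith)
    have h2 : 0 < a := by linarith
    positivity
  have hIs : 0 < ∫ a in Set.Ioi s, 1 / (a * f a) := by
    rw [setIntegral_pos_iff_support_of_nonneg_ae _ (hf_int s hs1.le)]
    · have : Function.support (fun a => 1 / (a * f a)) ∩ Set.Ioi s = Set.Ioi s :=
        Set.inter_eq_right.2 fun a ha => (hpos a ha).ne'
      rw [this]
      simp
    · filter_upwards [ae_restrict_mem measurableSet_Ioi] with a ha
      exact (hpos a ha).le
  have hr0 : 0 < t / s := by positivity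
  have hr1 : 1 ≤ t / s := (one_le_div hs0).2 hst
  have hrs : t / s * s = t := by field_simp
  have hsub := integral_comp_mul_left_Ioi (fun a => 1 / (a * f a)) s hr0
  have hint := (integrableOn_Ioi_comp_mul_left_iff (fun a => 1 / (a * f a)) s hr0).2
    (by rw [hrs]; exact hf_int t ht1.le)
  rw [hrs, smul_eq_mul] at hsub
  have hIt : (∫ a in Set.Ioi t, 1 / (a * f a))
      = ∫ x in Set.Ioi s, t / s * (1 / (t / s * x * f (t / s * x))) := by
    rw [integral_const_mul, hsub, ← mul_assoc, mul_inv_cancel₀ hr0.ne', one_mul]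
  have key : (∫ a in Set.Ioi s, 1 / (a * f a)) * s ^ ((1 : ℝ) / 2)
      ≤ (∫ a in Set.Ioi t, 1 / (a * f a)) * t ^ ((1 : ℝ) / 2) := by
    rw [hIt, ← integral_mul_const, ← integral_mul_const]
    refine setIntegral_mono_on ((hf_int s hs1.le).mul_const _)
      ((hint.const_mul _).mul_const _) measurableSet_Ioi fun x hx => ?_
    have hx1 : s < x := hx
    have hx0 : 0 < x := by linarith
    have hxr : x ≤ t / s * x := le_mul_of_one_le_left hx0.le hr1
    have hm := hf_anti (show (1 : ℝ) ≤ x by linarith) (show (1 : ℝ) ≤ t / s * x by linarith) hxr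
    have hf1 := hf_ge x (by linarith)
    have hf2 := hf_ge (t / s * x) (by linarith)
    have hpx : 0 < x ^ ((1 : ℝ) / 2) := Real.rpow_pos_of_pos hx0 _
    simp only at hm
    rw [Real.mul_rpow hr0.le hx0.le, Real.div_rpow ht0.le hs0.le,
      div_le_div_iff₀ (by positivity) hpx] at hm
    have hm2 : f (t / s * x) * s ^ ((1 : ℝ) / 2) ≤ f x * t ^ ((1 : ℝ) / 2) := by
      have e : f x * (t ^ ((1 : ℝ) / 2) / s ^ ((1 : ℝ) / 2) * x ^ ((1 : ℝ) / 2))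
        = (f x * t ^ ((1 : ℝ) / 2) / s ^ ((1 : ℝ) / 2)) * x ^ ((1 : ℝ) / 2) := by ring
      rw [e] at hm
      exact (le_div_iff₀ hps).1 (le_of_mul_le_mul_right hm hpx)
    have e2 : t / s * (1 / (t / s * x * f (t / s * x))) = 1 / (x * f (t / s * x)) := by
      generalize f (t / s * x) = y at *
      have : y ≠ 0 := by linarith
      field_simp
    rw [e2, one_div_mul_eq_div, one_div_mul_eq_div,
      div_le_div_iff₀ (by positivity) (by positivity)]
    nlinarith
  have := inv_anti₀ (mul_pos hIs hps) key
  simpa [mul_inv, div_eq_mul_inv, mul_comm] using this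
end

section
/- Let f : [1,∞) → [1,∞) be continuously differentiable and monotonically increasing with ∫_t^∞ da/(a·f(a)) < ∞ for every t ≥ 1, and define g(t) := (∫_t^∞ da/(a·f(a)))^{-1}. Suppose η ∈ (0,1) satisfies g(t)/f(t) + t·f'(t)/f(t) ≤ η for all t > 1. Then the function ω(δ) := g(δ^{-1/η})^{-2} is concave on (0,1). -/
open MeasureTheory

lemma tail_pos (h : ℝ → ℝ) (t : ℝ) (hpos : ∀ a > t, 0 < h a)
    (hi : IntegrableOn h (Set.Ioi t)) : 0 < ∫ a in Set.Ioi t, h a := by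
  rw [setIntegral_pos_iff_support_of_nonneg_ae _ hi]
  · have : Function.support h ∩ Set.Ioi t = Set.Ioi t := by
      apply Set.inter_eq_right.2
      intro a ha
      exact (hpos a ha).ne'
    rw [this]
    simp
  · filter_upwards [ae_restrict_mem measurableSet_Ioi] with a ha
    exact (hpos a ha).le

lemma tail_deriv (h : ℝ → ℝ) (hc : ∀ a ≥ (1 : ℝ), ContinuousAt h a)
    (hi : ∀ t ≥ (1 : ℝ), IntegrableOn h (Set.Ioi t)) (t : ℝ) (ht : 1 < t) :
    HasDerivAt (fun s => ∫ a in Set.Ioi s, h a) (-(h t)) t := by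
  have hcon : ContinuousOn h (Set.Ici 1) := fun a ha => (hc a ha).continuousWithinAt
  have h1 : HasDerivAt (fun s => ∫ a in (1 : ℝ)..s, h a) (h t) t := by
    apply intervalIntegral.integral_hasDerivAt_right
    · rw [intervalIntegrable_iff_integrableOn_Ioc_of_le ht.le]
      exact (hi 1 le_rfl).mono_set Set.Ioc_subset_Ioi_self
    · exact (hcon.mono Set.Ioi_subset_Ici_self).stronglyMeasurableAtFilter isOpen_Ioi t ht
    · exact hc t ht.le
  have h2 := h1.const_sub (∫ a in Set.Ioi (1 : ℝ), h a)
  refine h2.congr_of_eventuallyEq ?_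
  filter_upwards [Ioi_mem_nhds ht] with s hs
  have hs : 1 < s := hs
  have := intervalIntegral.integral_interval_add_Ioi (hi 1 le_rfl) (hi s hs.le)
  linarith

/-- Lemma 2.3 (ii): if `f : [1,∞) → [1,∞)` is continuously differentiable, increasing,
with finite tail integrals, `g(t) := (∫_t^∞ da/(a f(a)))⁻¹`, and `η ∈ (0,1)` satisfies
`g(t)/f(t) + t f'(t)/f(t) ≤ η` for all `t > 1`, then `ω(δ) := g(δ^{-1/η})^{-2}` is
concave on `(0,1)`. -/
theorem omega_concaveOn (f : ℝ → ℝ)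
    (hf_diff : ∀ t ≥ (1 : ℝ), DifferentiableAt ℝ f t)
    (hf_deriv_cont : ContinuousOn (deriv f) (Set.Ici 1))
    (hf_mono : MonotoneOn f (Set.Ici 1))
    (hf_ge : ∀ t ≥ (1 : ℝ), 1 ≤ f t)
    (hf_int : ∀ t ≥ (1 : ℝ), IntegrableOn (fun a => 1 / (a * f a)) (Set.Ioi t))
    (g : ℝ → ℝ) (hg : ∀ t, g t = (∫ a in Set.Ioi t, 1 / (a * f a))⁻¹)
    (η : ℝ) (hη : η ∈ Set.Ioo (0 : ℝ) 1)
    (hη2 : ∀ t > (1 : ℝ), g t / f t + t * deriv f t / f t ≤ η)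
    (ω : ℝ → ℝ) (hω : ∀ δ, ω δ = ((g (δ ^ (-(1 / η))))⁻¹) ^ 2) :
    ConcaveOn ℝ (Set.Ioo 0 1) ω := by
  obtain ⟨hη0, hη1⟩ := hη
  set G : ℝ → ℝ := fun t => ∫ a in Set.Ioi t, 1 / (a * f a) with hG
  have hgG : ∀ t, g t = (G t)⁻¹ := hg
  have hωG : ω = fun δ => (G (δ ^ (-(1 / η)))) ^ 2 := by
    funext δ; rw [hω, hgG, inv_inv]
  have hGpos : ∀ t > (1 : ℝ), 0 < G t := by
    intro t ht
    apply tail_pos _ _ _ (hf_int t ht.le)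
    intro a ha
    have ha1 : 1 < a := lt_trans ht ha
    have := hf_ge a ha1.le
    positivity
  have hGd : ∀ t > (1 : ℝ), HasDerivAt G (-(1 / (t * f t))) t := by
    intro t ht
    refine tail_deriv (fun a => 1 / (a * f a)) ?_ hf_int t ht
    intro a ha
    have := hf_ge a ha
    have h0 : a * f a ≠ 0 := by positivity
    exact continuousAt_const.div (continuousAt_id.mul (hf_diff a ha).continuousAt) h0
  have hT : ∀ δ ∈ Set.Ioo (0 : ℝ) 1, 1 < δ ^ (-(1 / η)) := by
    intro δ hδ
    apply Real.one_lt_rpow_of_pos_of_lt_one_of_neg hδ.1 hδ.2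
    have : 0 < 1 / η := by positivity
    linarith
  have hTd : ∀ δ ∈ Set.Ioo (0 : ℝ) 1, HasDerivAt (fun δ : ℝ => δ ^ (-(1 / η)))
      (-(1 / η) * (δ ^ (-(1 / η)) / δ)) δ := by
    intro δ hδ
    have := Real.hasDerivAt_rpow_const (x := δ) (p := -(1 / η)) (Or.inl hδ.1.ne')
    rwa [Real.rpow_sub_one hδ.1.ne'] at this
  have hd1 : ∀ δ ∈ Set.Ioo (0 : ℝ) 1, HasDerivAt ω
      (2 / η * (G (δ ^ (-(1 / η))) / (f (δ ^ (-(1 / η))) * δ))) δ := by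
    intro δ hδ
    have ht := hT δ hδ
    have h := ((hGd _ ht).comp δ (hTd δ hδ)).pow 2
    rw [hωG]
    refine h.congr_deriv ?_
    have hf1 := hf_ge _ ht.le
    have hδ0 := hδ.1
    simp only [Function.comp]
    generalize δ ^ (-(1 / η)) = t at *
    have : f t ≠ 0 := by positivity
    have : t ≠ 0 := by positivity
    field_simp
    try norm_num
  have hd2 : ∀ δ ∈ Set.Ioo (0 : ℝ) 1, HasDerivAt
      (fun δ => 2 / η * (G (δ ^ (-(1 / η))) / (f (δ ^ (-(1 / η))) * δ)))
      (2 / (η ^ 2 * (f (δ ^ (-(1 / η)))) ^ 2 * δ ^ 2) *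
        (1 + G (δ ^ (-(1 / η))) * (δ ^ (-(1 / η)) * deriv f (δ ^ (-(1 / η))))
          - η * (G (δ ^ (-(1 / η))) * f (δ ^ (-(1 / η)))))) δ := by
    intro δ hδ
    have ht := hT δ hδ
    have hf1 := hf_ge _ ht.le
    have hδ0 := hδ.1
    have hne : f (δ ^ (-(1 / η))) * δ ≠ 0 := by positivity
    have h := ((((hGd _ ht).comp δ (hTd δ hδ)).div
      ((((hf_diff _ ht.le).hasDerivAt).comp δ (hTd δ hδ)).mul (hasDerivAt_id δ)) hne).const_mul
        (2 / η))
    refine h.congr_deriv ?_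
    simp only [Function.comp, Pi.mul_apply, id]
    generalize δ ^ (-(1 / η)) = t at *
    have : f t ≠ 0 := by positivity
    have : t ≠ 0 := by positivity
    field_simp
    ring
  refine concaveOn_of_hasDerivWithinAt2_nonpos (convex_Ioo 0 1)
    (fun δ hδ => (hd1 δ hδ).continuousAt.continuousWithinAt)
    (fun δ hδ => (hd1 δ (interior_subset hδ)).hasDerivWithinAt)
    (fun δ hδ => (hd2 δ (interior_subset hδ)).hasDerivWithinAt) ?_
  intro δ hδ
  have hδ := interior_subset hδ
  have ht := hT δ hδ
  have hδ0 := hδ.1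
  generalize δ ^ (-(1 / η)) = t at *
  have hf1 := hf_ge _ ht.le
  have hfp : 0 < f t := by linarith
  have hGp := hGpos t ht
  have key := hη2 t ht
  rw [hgG] at key
  apply mul_nonpos_of_nonneg_of_nonpos
  · positivity
  · have := mul_le_mul_of_nonneg_right key (mul_pos hGp hfp).le
    have e : ((G t)⁻¹ / f t + t * deriv f t / f t) * (G t * f t)
        = 1 + G t * (t * deriv f t) := by
      field_simp
    linarith
end

section
/- Let n ≥ 1, let R ≥ 1 and C > 0, let g : (0,∞) → (0,∞) satisfy g(t) ≤ t^{1/2} for all t > 0, let 0 < α ≤ 1, let X ⊆ ℂⁿ with |z| ≤ R for all z ∈ X, let ζ ∈ ℂⁿ with |ζ| ≤ R, and let ρ : X → ℝ satisfy ρ ≤ 0 on X and |ρ(z) − ρ(z')| ≤ C·g(|z − z'|^{-1})^{-2} for all distinct z, z' ∈ X. Then for all distinct z, z' ∈ X one has |(−2ρ(z) + |z − ζ|²)^{α/2} − (−2ρ(z') + |z' − ζ|²)^{α/2}| ≤ (2C + 4R)^{α/2} · g(|z − z'|^{-1})^{-α}. -/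
theorem rpow_le_aux {p t s : ℝ} (hp : 0 ≤ p) (hp1 : p ≤ 1) (ht : 0 ≤ t) (hs : 0 ≤ s) :
    t ^ p ≤ s ^ p + |t - s| ^ p :=
  (Real.rpow_le_rpow ht (by linarith [le_abs_self (t - s)]) hp).trans
    (Real.rpow_add_le_add_rpow hs (abs_nonneg _) hp hp1)

/-- Core of Proposition 3.1 (ii): if `ρ ≤ 0` is `g²`-Hölder on a bounded set
`X ⊆ ℂⁿ` (with `g(t) ≤ t^{1/2}`), then `z ↦ (−2ρ(z) + |z − ζ|²)^{α/2}` is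
`g^α`-Hölder, uniformly in `ζ`. -/
theorem barrier_g_alpha_holder (n : ℕ) (hn : 1 ≤ n) (R C : ℝ) (hR : 1 ≤ R) (hC : 0 < C)
    (g : ℝ → ℝ) (hg_pos : ∀ t > (0 : ℝ), 0 < g t)
    (hg_le : ∀ t > (0 : ℝ), g t ≤ t ^ ((1 : ℝ) / 2))
    (α : ℝ) (hα : α ∈ Set.Ioc (0 : ℝ) 1)
    (X : Set (EuclideanSpace ℂ (Fin n))) (hX : ∀ z ∈ X, ‖z‖ ≤ R)
    (ζ : EuclideanSpace ℂ (Fin n)) (hζ : ‖ζ‖ ≤ R)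
    (ρ : EuclideanSpace ℂ (Fin n) → ℝ) (hρ_nonpos : ∀ z ∈ X, ρ z ≤ 0)
    (hρ_holder : ∀ z ∈ X, ∀ z' ∈ X, z ≠ z' →
      |ρ z - ρ z'| ≤ C * ((g ‖z - z'‖⁻¹)⁻¹) ^ 2) :
    ∀ z ∈ X, ∀ z' ∈ X, z ≠ z' →
      |(-2 * ρ z + ‖z - ζ‖ ^ 2) ^ (α / 2) - (-2 * ρ z' + ‖z' - ζ‖ ^ 2) ^ (α / 2)|
        ≤ (2 * C + 4 * R) ^ (α / 2) * ((g ‖z - z'‖⁻¹)⁻¹) ^ α := by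
  intro z hz z' hz' hne
  obtain ⟨h0, h1⟩ := hα
  have hd : 0 < ‖z - z'‖ := norm_pos_iff.2 (sub_ne_zero.2 hne)
  have hρ := hρ_holder z hz z' hz' hne
  have hgp := hg_pos _ (inv_pos.2 hd)
  have hgl := hg_le _ (inv_pos.2 hd)
  generalize g ‖z - z'‖⁻¹ = G at *
  have hG2 : G ^ 2 ≤ ‖z - z'‖⁻¹ := by
    have h := pow_le_pow_left₀ hgp.le hgl 2
    rwa [← Real.sqrt_eq_rpow, Real.sq_sqrt (inv_pos.2 hd).le] at h
  have hdG : ‖z - z'‖ ≤ G⁻¹ ^ 2 := by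
    rw [inv_pow]
    exact (le_inv_comm₀ (by positivity) hd).1 hG2
  have hsq : |‖z - ζ‖ ^ 2 - ‖z' - ζ‖ ^ 2| ≤ 4 * R * ‖z - z'‖ := by
    have e : ‖z - ζ‖ ^ 2 - ‖z' - ζ‖ ^ 2
        = (‖z - ζ‖ + ‖z' - ζ‖) * (‖z - ζ‖ - ‖z' - ζ‖) := by ring
    have a1 : |‖z - ζ‖ - ‖z' - ζ‖| ≤ ‖z - z'‖ := by
      simpa using abs_norm_sub_norm_le (z - ζ) (z' - ζ)
    have a2 := norm_sub_le z ζ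
    have a3 := norm_sub_le z' ζ
    have a4 := hX z hz
    have a5 := hX z' hz'
    rw [e, abs_mul, abs_of_nonneg (by positivity)]
    exact mul_le_mul (by linarith) a1 (abs_nonneg _) (by linarith)
  have ht : 0 ≤ -2 * ρ z + ‖z - ζ‖ ^ 2 := by
    have := hρ_nonpos z hz
    have := sq_nonneg ‖z - ζ‖
    linarith
  have hs : 0 ≤ -2 * ρ z' + ‖z' - ζ‖ ^ 2 := by
    have := hρ_nonpos z' hz'
    have := sq_nonneg ‖z' - ζ‖
    linarith
  have hR' : 4 * R * ‖z - z'‖ ≤ 4 * R * G⁻¹ ^ 2 :=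
    mul_le_mul_of_nonneg_left hdG (by linarith)
  have key : |(-2 * ρ z + ‖z - ζ‖ ^ 2) - (-2 * ρ z' + ‖z' - ζ‖ ^ 2)|
      ≤ (2 * C + 4 * R) * G⁻¹ ^ 2 := by
    rw [abs_le] at hρ hsq ⊢
    constructor <;> linarith [hρ.1, hρ.2, hsq.1, hsq.2]
  have hfin : |(-2 * ρ z + ‖z - ζ‖ ^ 2) - (-2 * ρ z' + ‖z' - ζ‖ ^ 2)| ^ (α / 2)
      ≤ (2 * C + 4 * R) ^ (α / 2) * G⁻¹ ^ α := by
    refine (Real.rpow_le_rpow (abs_nonneg _) key (by linarith)).trans_eq ?_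
    rw [Real.mul_rpow (by linarith) (by positivity), ← Real.rpow_natCast G⁻¹ 2,
      ← Real.rpow_mul (by positivity)]
    congr 2
    push_cast
    ring
  refine le_trans ?_ hfin
  have b1 := rpow_le_aux (p := α / 2) (by linarith) (by linarith) ht hs
  have b2 := rpow_le_aux (p := α / 2) (by linarith) (by linarith) hs ht
  rw [abs_sub_comm (-2 * ρ z' + ‖z' - ζ‖ ^ 2)] at b2
  exact abs_le.2 ⟨by linarith, by linarith⟩
end
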